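/- arXiv:1801.10410 — 2 statements merged into one kernel-verified Lean document; each statement's English description precedes it below -/
import Mathlib

section
/- Let p be an odd prime and G_p = ⟨x, y : x^{p²} = y^{p²} = 1, [x,y] = x^p⟩. For s, t ∈ ℤ/p, define γ_{s,t} : G_p → Aut(G_p) determined by: γ_{s,t}(x) fixes x and sends y ↦ x^{ps} y; γ_{s,t}(y) sends x ↦ x^{1+pt} and y ↦ y^{1+p(s+t)}; and γ_{s,t} kills Z(G_p). Then γ_{s,t} is well-defined, satisfies γ_{s,t}(gh) = γ_{s,t}(h)γ_{s,t}(g) for all g,h, and γ_{s,t}(g^β) = γ_{s,t}(g)^β for all β ∈ Aut(G_p). -/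
/-- The relators of the presentation
`⟨x, y : x^(p²) = y^(p²) = 1, [x,y] = x^p⟩`, where `[x,y] = x⁻¹y⁻¹xy`. -/
def gpRels (p : ℕ) : Set (FreeGroup (Fin 2)) :=
  { FreeGroup.of 0 ^ p ^ 2, FreeGroup.of 1 ^ p ^ 2,
    (FreeGroup.of 0)⁻¹ * (FreeGroup.of 1)⁻¹ * FreeGroup.of 0 * FreeGroup.of 1
      * (FreeGroup.of 0 ^ p)⁻¹ }

/-- The group `G_p = ⟨x, y : x^(p²) = y^(p²) = 1, [x,y] = x^p⟩`. -/
abbrev GpGroup (p : ℕ) := PresentedGroup (gpRels p)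

/-- The generator `x` of `G_p`. -/
def gpX (p : ℕ) : GpGroup p := PresentedGroup.of 0

/-- The generator `y` of `G_p`. -/
def gpY (p : ℕ) : GpGroup p := PresentedGroup.of 1

/-!
In `G = G_n`, `n` odd, the commutator `[x, y] = x ^ n` is central of order dividing `n`, so `G` has
class two and `g ↦ g ^ n` is a homomorphism `G → Z(G)` killed by `n`. Hence there is a
bimultiplicative pairing `κ : G × G → Z(G)`, `κ(h, g) = g ^ (n λ(h))`, where `λ : G → ℤ/n` sends
`x, y` to `0, 1`. Comparing on generators gives `[g, h] = κ(h, g) κ(g, h)⁻¹`, and since `x`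
has order `n²` and `⟨x⟩ ∩ ⟨y⟩ = 1`, this formula determines `κ`: so `λ` is invariant under `Aut(G)`
and `κ` is trivial on `Z(G)`. Any bimultiplicative `B : G × G → Z(G)` with `B(a, B(b, c)) = 1` makes
`G` act on itself by the automorphisms `h ↦ h B(g, h)`; take `B(g, h) = κ(h, g) ^ s κ(g, h) ^ t`.
-/

open Subgroup
open scoped commutatorElement IsMulCommutative

section PairingAction

variable {G : Type*} [Group G]

/-- The action `g ↦ (h ↦ h * B g h)` of `G` on itself by central automorphisms attached to a
bimultiplicative pairing `B` with values in the centre. The condition `hB` makes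
this multiplicative in `g`. -/
def pairingAction (B : G →* G →* center G) (hB : ∀ a b c, B a (B b c) = 1) : G →* MulAut G :=
  have cancel (a h : G) : h * B a h * B a⁻¹ (h * B a h) = h := by
    simp [mul_assoc, hB]
  MonoidHom.mk'
    (fun g ↦
      { toFun := fun h ↦ h * B g h
        invFun := fun h ↦ h * B g⁻¹ h
        left_inv := cancel g
        right_inv := fun h ↦ by simpa only [inv_inv] using cancel g⁻¹ h
        map_mul' := fun h k ↦ by
          rw [map_mul, Subgroup.coe_mul, mul_assoc, mul_assoc, ← mul_assoc k,
            mem_center_iff.mp (B g h).2 k, mul_assoc] })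
    fun a b ↦ by
      ext h
      change h * (B (a * b) h : G) = h * B b h * B a (h * B b h)
      rw [map_mul, map_mul, hB, mul_one, MonoidHom.mul_apply, mul_comm, Subgroup.coe_mul, mul_assoc]

@[simp]
lemma pairingAction_apply (B : G →* G →* center G) (hB : ∀ a b c, B a (B b c) = 1) (g h : G) :
    pairingAction B hB g h = h * B g h :=
  rfl

lemma pairingAction_eq_one {B : G →* G →* center G} (hB : ∀ a b c, B a (B b c) = 1) {g : G}
    (hg : B g = 1) : pairingAction B hB g = 1 := by
  ext h
  simp [hg]

lemma pairingAction_mulAut_apply {B : G →* G →* center G} (hB : ∀ a b c, B a (B b c) = 1)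
    {β : MulAut G} (hβ : ∀ g h, (B (β g) (β h) : G) = β (B g h)) (g : G) :
    pairingAction B hB (β g) = β * pairingAction B hB g * β⁻¹ := by
  rw [eq_mul_inv_iff_mul_eq]
  ext h
  simp [hβ]

end PairingAction

section ClassTwo

variable {G : Type*} [Group G] {n : ℕ}

lemma commutator_le_center_of_closure_eq_top {S : Set G} (hS : closure S = ⊤)
    (hcomm : ∀ a ∈ S, ∀ b ∈ S, ⁅a, b⁆ ∈ center G) : commutator G ≤ center G := by
  rw [← Normal.quotient_commutative_iff_commutator_le]
  let π := QuotientGroup.mk' (center G)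
  have hπS : closure (π '' S) = ⊤ := by
    rw [← MonoidHom.map_closure, hS, map_top_of_surjective π (QuotientGroup.mk'_surjective _)]
  have : IsMulCommutative (closure (π '' S)) := by
    apply Subgroup.isMulCommutative_closure
    rintro _ ⟨a, ha, rfl⟩ _ ⟨b, hb, rfl⟩
    rw [← commutatorElement_eq_one_iff_mul_comm, ← map_commutatorElement]
    exact (QuotientGroup.eq_one_iff _).mpr (hcomm a ha b hb)
  rw [hπS] at this
  exact .of_comm fun a b ↦ setLike_mul_comm (mem_top a) (mem_top b)

lemma mul_pow_of_commutatorElement_mem_center {a b : G} (h : ⁅b, a⁆ ∈ center G) (n : ℕ) :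
    (a * b) ^ n = a ^ n * b ^ n * ⁅b, a⁆ ^ n.choose 2 := by
  have central (k : ℕ) (g : G) : Commute (⁅b, a⁆ ^ k) g :=
    .pow_left (mem_center_iff.mp h g).symm k
  have pow_mul_left (k : ℕ) : b ^ k * a = a * b ^ k * ⁅b, a⁆ ^ k := by
    have semiconj : SemiconjBy a (b * ⁅b, a⁆) b := by
      rw [SemiconjBy, mem_center_iff.mp h b, ← mul_assoc, mem_center_iff.mp h a,
        commutatorElement_def]
      group
    have commute : Commute b ⁅b, a⁆ := mem_center_iff.mp h b
    rw [← (semiconj.pow_right k).eq, commute.mul_pow, mul_assoc]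
  induction n with
  | zero => simp
  | succ n ih =>
    calc (a * b) ^ (n + 1)
      _ = a ^ n * b ^ n * (⁅b, a⁆ ^ n.choose 2 * (a * b)) := by rw [pow_succ, ih, mul_assoc]
      _ = a ^ n * (b ^ n * a) * b * ⁅b, a⁆ ^ n.choose 2 := by rw [(central _ _).eq]; group
      _ = a ^ n * a * b ^ n * (⁅b, a⁆ ^ n * b) * ⁅b, a⁆ ^ n.choose 2 := by
        rw [pow_mul_left]; group
      _ = a ^ (n + 1) * b ^ (n + 1) * (⁅b, a⁆ ^ n * ⁅b, a⁆ ^ n.choose 2) := by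
        rw [(central _ _).eq]; group
      _ = a ^ (n + 1) * b ^ (n + 1) * ⁅b, a⁆ ^ (n + 1).choose 2 := by
        rw [← pow_add, Nat.choose_succ_succ' n 1, Nat.choose_one_right]

lemma dvd_choose_two_of_odd (hn : Odd n) : n ∣ n.choose 2 := by
  obtain ⟨k, rfl⟩ := hn
  exact ⟨k, by simp [Nat.choose_two_right, Nat.mul_left_comm (2 * k + 1)]⟩

/-- The commutator of a group of class at most two, as a bimultiplicative pairing into its
centre. -/
def commutatorPairing (hG : commutator G ≤ center G) : G →* G →* center G :=
  have mem (g h : G) : ⁅g, h⁆ ∈ center G := hG (commutator_mem_commutator (mem_top g) (mem_top h))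
  MonoidHom.mk'
    (fun g ↦ MonoidHom.mk' (fun h ↦ ⟨⁅g, h⁆, mem g h⟩) fun h k ↦ Subtype.ext <| by
      change ⁅g, h * k⁆ = ⁅g, h⁆ * ⁅g, k⁆
      rw [commutatorElement_mul_right_eq_mul_conj, mul_assoc _ h,
        mem_center_iff.mp (mem g k) h, ← mul_assoc, mul_inv_cancel_right])
    fun g k ↦ MonoidHom.ext fun h ↦ Subtype.ext <| by
      change ⁅g * k, h⁆ = ⁅g, h⁆ * ⁅k, h⁆
      rw [commutatorElement_mul_left_eq_conj_mul, mem_center_iff.mp (mem k h) g,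
        mul_inv_cancel_right, mem_center_iff.mp (mem k h)]

@[simp]
lemma coe_commutatorPairing (hG : commutator G ≤ center G) (g h : G) :
    (commutatorPairing hG g h : G) = ⁅g, h⁆ :=
  rfl

/-- The `n`-th power map, for odd `n`, of a group of class at most two whose commutators are killed
by `n`: it is a homomorphism into the centre. -/
def powCenterHom (hG : commutator G ≤ center G) (hn : Odd n) (hpow : ∀ g h : G, ⁅g, h⁆ ^ n = 1) :
    G →* center G :=
  MonoidHom.mk'
    (fun g ↦ ⟨g ^ n, mem_center_iff.mpr fun h ↦ by
      rw [← commutatorElement_eq_one_iff_mul_comm, ← coe_commutatorPairing hG, map_pow,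
        Subgroup.coe_pow, coe_commutatorPairing, hpow]⟩)
    fun g h ↦ by
      obtain ⟨k, hk⟩ := dvd_choose_two_of_odd hn
      ext
      simp [mul_pow_of_commutatorElement_mem_center
        (hG (commutator_mem_commutator (mem_top h) (mem_top g))), hk, pow_mul, hpow]

@[simp]
lemma coe_powCenterHom (hG : commutator G ≤ center G) (hn : Odd n)
    (hpow : ∀ g h : G, ⁅g, h⁆ ^ n = 1) (g : G) : (powCenterHom hG hn hpow g : G) = g ^ n :=
  rfl

end ClassTwo

namespace GpGroup

variable {n : ℕ}

section Presentation

lemma gpX_pow_sq : gpX n ^ n ^ 2 = 1 :=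
  PresentedGroup.one_of_mem (rels := gpRels n) (by simp [gpRels])

lemma gpY_pow_sq : gpY n ^ n ^ 2 = 1 :=
  PresentedGroup.one_of_mem (rels := gpRels n) (by simp [gpRels])

lemma inv_mul_inv_mul_gpX_mul_gpY : (gpX n)⁻¹ * (gpY n)⁻¹ * gpX n * gpY n = gpX n ^ n :=
  mul_inv_eq_one.mp <| PresentedGroup.one_of_mem (rels := gpRels n) (by simp [gpRels])

/-- The homomorphism out of `G_n` given by the images `a`, `b` of the generators `x`, `y`. -/
def lift {H : Type*} [Group H] (a b : H) (ha : a ^ n ^ 2 = 1) (hb : b ^ n ^ 2 = 1)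
    (hab : a⁻¹ * b⁻¹ * a * b = a ^ n) : GpGroup n →* H :=
  PresentedGroup.toGroup (f := ![a, b]) <| by simp [gpRels, ha, hb, hab]

section Lift

variable {H : Type*} [Group H] {a b : H} (ha : a ^ n ^ 2 = 1) (hb : b ^ n ^ 2 = 1)
  (hab : a⁻¹ * b⁻¹ * a * b = a ^ n)

@[simp]
lemma lift_gpX : lift a b ha hb hab (gpX n) = a :=
  PresentedGroup.toGroup.of _

@[simp]
lemma lift_gpY : lift a b ha hb hab (gpY n) = b :=
  PresentedGroup.toGroup.of _

end Lift

lemma hom_ext {H : Type*} [Group H] {φ ψ : GpGroup n →* H} (hx : φ (gpX n) = ψ (gpX n))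
    (hy : φ (gpY n) = ψ (gpY n)) : φ = ψ :=
  PresentedGroup.ext (Fin.forall_fin_two.mpr ⟨hx, hy⟩)

lemma closure_gpX_gpY : closure {gpX n, gpY n} = (⊤ : Subgroup (GpGroup n)) := by
  rw [← PresentedGroup.closure_range_of (gpRels n)]
  congr 1
  ext g
  simp [Fin.exists_fin_two, gpX, gpY, eq_comm]

lemma mem_of_gpX_mem_of_gpY_mem {H : Subgroup (GpGroup n)} (hx : gpX n ∈ H) (hy : gpY n ∈ H)
    (g : GpGroup n) : g ∈ H := by
  have : closure {gpX n, gpY n} ≤ H := by simp [closure_le, Set.insert_subset_iff, hx, hy]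
  exact this (closure_gpX_gpY ▸ mem_top g)

end Presentation

section ClassTwo

lemma commute_gpX_pow_gpY : Commute (gpX n ^ n) (gpY n) := by
  have conj : (gpY n)⁻¹ * gpX n * gpY n = gpX n ^ (n + 1) := by
    rw [pow_succ', ← inv_mul_inv_mul_gpX_mul_gpY]
    group
  have conj_pow : (gpY n)⁻¹ * gpX n ^ n * gpY n = gpX n ^ n := by
    calc (gpY n)⁻¹ * gpX n ^ n * gpY n
      _ = ((gpY n)⁻¹ * gpX n * gpY n) ^ n := by
        simpa using (_root_.conj_pow (a := (gpY n)⁻¹) (b := gpX n) (i := n)).symm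
      _ = gpX n ^ n ^ 2 * gpX n ^ n := by rw [conj, ← pow_mul, ← pow_add]; ring_nf
      _ = gpX n ^ n := by rw [gpX_pow_sq, one_mul]
  rw [mul_assoc, inv_mul_eq_iff_eq_mul] at conj_pow
  exact conj_pow

lemma gpX_pow_mem_center : gpX n ^ n ∈ center (GpGroup n) := by
  have (g : GpGroup n) : g ∈ centralizer {gpX n ^ n} :=
    mem_of_gpX_mem_of_gpY_mem
      (mem_centralizer_singleton_iff.mpr ((Commute.refl (gpX n)).pow_right n))
      (mem_centralizer_singleton_iff.mpr commute_gpX_pow_gpY.symm) g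
  exact mem_center_iff.mpr fun g ↦ mem_centralizer_singleton_iff.mp (this g)

lemma commutatorElement_gpX_gpY : ⁅gpX n, gpY n⁆ = gpX n ^ n := by
  have : gpY n * gpX n * gpX n ^ n = gpX n * gpY n := by
    rw [← inv_mul_inv_mul_gpX_mul_gpY]
    group
  rw [commutatorElement_def, ← this, mem_center_iff.mp gpX_pow_mem_center]
  group

lemma commutator_le_center : commutator (GpGroup n) ≤ center (GpGroup n) := by
  refine commutator_le_center_of_closure_eq_top (closure_gpX_gpY (n := n)) ?_
  have hxy := commutatorElement_gpX_gpY ▸ gpX_pow_mem_center (n := n)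
  have hyx : ⁅gpY n, gpX n⁆ ∈ center (GpGroup n) := commutatorElement_inv (gpX n) _ ▸ inv_mem hxy
  simp [hxy, hyx, one_mem]

lemma commutatorElement_pow (g h : GpGroup n) : ⁅g, h⁆ ^ n = 1 := by
  have pow_eq_one : commutatorPairing (commutator_le_center (n := n)) ^ n = 1 := by
    have hxy : ⁅gpX n, gpY n⁆ ^ n = 1 := by
      rw [commutatorElement_gpX_gpY, ← pow_mul, ← sq, gpX_pow_sq]
    have hyx : ⁅gpY n, gpX n⁆ ^ n = 1 := by
      rw [← commutatorElement_inv, inv_pow, hxy, inv_one]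
    refine hom_ext (hom_ext ?_ ?_) (hom_ext ?_ ?_) <;> ext <;> simp [hxy, hyx]
  simpa using congr_arg Subtype.val (DFunLike.congr_fun (DFunLike.congr_fun pow_eq_one g) h)

end ClassTwo

section Zpow

lemma natCast_sq_eq_zero (n : ℕ) : (n : ZMod (n ^ 2)) ^ 2 = 0 := by
  exact_mod_cast ZMod.natCast_self (n ^ 2)

/-- The unit `1 - n` of `ℤ/n²`: as `y * x * y⁻¹ = x ^ (1 - n)`, conjugation by `y` acts by it on the
exponents of `x`. -/
def oneSub (n : ℕ) : (ZMod (n ^ 2))ˣ :=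
  ⟨1 - n, 1 + n, by linear_combination -natCast_sq_eq_zero n,
    by linear_combination -natCast_sq_eq_zero n⟩

lemma oneSub_pow_sq : oneSub n ^ n ^ 2 = 1 := by
  have dvd : (n : ZMod (n ^ 2)) ^ (1 + 1) ∣ (1 - n) ^ n ^ 1 - 1 ^ n ^ 1 :=
    dvd_sub_pow_of_dvd_sub (by simp) 1
  have pow_eq_one : oneSub n ^ n = 1 := by
    ext
    simpa [natCast_sq_eq_zero, sub_eq_zero, oneSub] using dvd
  rw [← one_pow n, ← pow_eq_one, ← pow_mul, ← sq]

/-- The permutation representation of `G_n` on `ℤ/n²` in which `x` is the translation by `1` and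
`y` the multiplication by `1 - n`. -/
def toPerm (n : ℕ) : GpGroup n →* Equiv.Perm (ZMod (n ^ 2)) :=
  lift (Equiv.addRight 1) (MulAction.toPermHom _ _ (oneSub n))
    (by ext; simp)
    (by rw [← map_pow, oneSub_pow_sq, map_one])
    (by
      rw [mul_assoc, mul_assoc, inv_mul_eq_iff_eq_mul, inv_mul_eq_iff_eq_mul, ← pow_succ']
      ext m
      suffices 1 = (1 - n : ZMod (n ^ 2)) * n + (1 - n) by simpa [Units.smul_def, oneSub, mul_add]
      linear_combination natCast_sq_eq_zero n)

lemma sq_dvd_of_gpX_zpow_eq_one {i : ℤ} (h : gpX n ^ i = 1) : (n : ℤ) ^ 2 ∣ i := by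
  have : (i : ZMod (n ^ 2)) = 0 := by
    simpa [toPerm] using DFunLike.congr_fun (congr_arg (toPerm n) h) 0
  exact_mod_cast (ZMod.intCast_zmod_eq_zero_iff_dvd _ _).mp this

lemma sq_dvd_of_gpX_zpow_eq_gpY_zpow {i j : ℤ} (h : gpX n ^ i = gpY n ^ j) :
    (n : ℤ) ^ 2 ∣ i ∧ (n : ℤ) ^ 2 ∣ j := by
  have hj : (n : ℤ) ^ 2 ∣ j := by
    let toCyclic : GpGroup n →* Multiplicative (ZMod (n ^ 2)) :=
      lift 1 (.ofAdd 1) (one_pow _) (by rw [← ofAdd_nsmul]; simp) (by simp)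
    have : (j : ZMod (n ^ 2)) = 0 := by
      simpa [toCyclic, ← ofAdd_zsmul] using (congr_arg toCyclic h).symm
    exact_mod_cast (ZMod.intCast_zmod_eq_zero_iff_dvd _ _).mp this
  refine ⟨sq_dvd_of_gpX_zpow_eq_one ?_, hj⟩
  obtain ⟨k, rfl⟩ := hj
  rw [h, zpow_mul, show gpY n ^ (n : ℤ) ^ 2 = 1 by exact_mod_cast gpY_pow_sq, one_zpow]

end Zpow

section PowPairing

variable (hn : Odd n)

/-- The homomorphism `g ↦ g ^ n` from `G_n` to its centre: `κ(h, ·)` is always a power of it. -/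
def powHom : GpGroup n →* center (GpGroup n) :=
  powCenterHom commutator_le_center hn commutatorElement_pow

@[simp]
lemma coe_powHom (g : GpGroup n) : (powHom hn g : GpGroup n) = g ^ n :=
  coe_powCenterHom ..

lemma powHom_pow : powHom hn ^ n = 1 := by
  refine hom_ext ?_ ?_ <;> ext <;> simp [← pow_mul, ← sq, gpX_pow_sq, gpY_pow_sq]

lemma powHom_zpow_eq_one {k : ℤ} (hk : (n : ℤ) ^ 2 ∣ n * k) : powHom hn ^ k = 1 := by
  have n_ne_zero : (n : ℤ) ≠ 0 := by exact_mod_cast hn.pos.ne'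
  obtain ⟨c, rfl⟩ : (n : ℤ) ∣ k := (mul_dvd_mul_iff_left n_ne_zero).mp (sq (n : ℤ) ▸ hk)
  rw [zpow_mul, zpow_natCast, powHom_pow, one_zpow]

/-- The pairing `κ(h, g) = g ^ (n λ(h))`, where `λ : G_n → ℤ/n` sends `x` to `0` and `y` to `1`. -/
def powPairing : GpGroup n →* GpGroup n →* center (GpGroup n) :=
  lift 1 (powHom hn) (one_pow _) (by rw [sq, pow_mul, powHom_pow, one_pow]) (by simp)

@[simp]
lemma powPairing_gpX : powPairing hn (gpX n) = 1 :=
  lift_gpX ..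

@[simp]
lemma powPairing_gpY : powPairing hn (gpY n) = powHom hn :=
  lift_gpY ..

lemma powPairing_mem_zpowers (h : GpGroup n) : powPairing hn h ∈ zpowers (powHom hn) := by
  suffices h ∈ (zpowers (powHom hn)).comap (powPairing hn) from this
  exact mem_of_gpX_mem_of_gpY_mem (by simp [one_mem]) (by simp) h

lemma commutatorPairing_eq_div :
    commutatorPairing commutator_le_center = (powPairing hn).flip / powPairing hn := by
  have hyx : ⁅gpY n, gpX n⁆ = (gpX n ^ n)⁻¹ := by
    rw [← commutatorElement_inv, commutatorElement_gpX_gpY]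
  refine hom_ext (hom_ext ?_ ?_) (hom_ext ?_ ?_) <;> ext <;>
    simp [commutatorElement_gpX_gpY, hyx]

lemma commutatorElement_eq_div (g h : GpGroup n) :
    ⁅g, h⁆ = (powPairing hn h g / powPairing hn g h : center (GpGroup n)) := by
  rw [← coe_commutatorPairing commutator_le_center, commutatorPairing_eq_div hn]
  rfl

lemma map_powPairing (β : MulAut (GpGroup n)) (h g : GpGroup n) :
    β (powPairing hn h g) = powPairing hn h (β g) := by
  obtain ⟨m, hm⟩ := mem_zpowers_iff.mp (powPairing_mem_zpowers hn h)
  simp [← hm]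

lemma eq_powPairing {μ : GpGroup n →* GpGroup n →* center (GpGroup n)}
    (hμ : ∀ h, μ h ∈ zpowers (powHom hn))
    (hcomm : ⁅gpX n, gpY n⁆ = (μ (gpY n) (gpX n) / μ (gpX n) (gpY n) : center (GpGroup n))) :
    μ = powPairing hn := by
  obtain ⟨a, ha⟩ := mem_zpowers_iff.mp (hμ (gpX n))
  obtain ⟨b, hb⟩ := mem_zpowers_iff.mp (hμ (gpY n))
  have : gpX n ^ (n * (b - 1) : ℤ) = gpY n ^ (n * a : ℤ) := by
    rw [commutatorElement_gpX_gpY, ← ha, ← hb] at hcomm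
    have pow_eq : gpX n ^ n = (gpX n ^ n) ^ b * ((gpY n ^ n) ^ a)⁻¹ := by
      simpa [div_eq_mul_inv] using hcomm
    rw [eq_mul_inv_iff_mul_eq, ← eq_inv_mul_iff_mul_eq] at pow_eq
    rw [zpow_mul, zpow_mul, zpow_natCast, zpow_natCast, pow_eq, zpow_sub_one,
      (Commute.zpow_self _ b).inv_right.eq]
  obtain ⟨hb', ha'⟩ := sq_dvd_of_gpX_zpow_eq_gpY_zpow this
  refine hom_ext ?_ ?_
  · rw [← ha, powHom_zpow_eq_one hn ha', powPairing_gpX]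
  · rw [← hb, powPairing_gpY, ← mul_inv_eq_one, ← zpow_sub_one, powHom_zpow_eq_one hn hb']

lemma powPairing_mulAut_apply (β : MulAut (GpGroup n)) (h : GpGroup n) :
    powPairing hn (β h) = powPairing hn h := by
  suffices (powPairing hn).comp β.toMonoidHom = powPairing hn from DFunLike.congr_fun this h
  refine eq_powPairing hn (fun h ↦ powPairing_mem_zpowers hn (β h)) (β.injective ?_)
  rw [map_commutatorElement, commutatorElement_eq_div hn]
  simp [map_powPairing]

lemma powPairing_eq_one_of_mem_center {z : GpGroup n} (hz : z ∈ center (GpGroup n)) :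
    powPairing hn z = 1 := by
  obtain ⟨m, hm⟩ := mem_zpowers_iff.mp (powPairing_mem_zpowers hn z)
  have comm := commutatorElement_eq_div hn (gpX n) z
  rw [commutatorElement_eq_one_iff_mul_comm.mpr (mem_center_iff.mp hz _), powPairing_gpX,
    ← hm] at comm
  have gpX_zpow : gpX n ^ (n * m : ℤ) = 1 := by
    simpa [zpow_mul] using comm.symm
  rw [← hm, powHom_zpow_eq_one hn (sq_dvd_of_gpX_zpow_eq_one gpX_zpow)]

lemma powPairing_apply_eq_one_of_mem_center (h : GpGroup n) {z : GpGroup n}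
    (hz : z ∈ center (GpGroup n)) : powPairing hn h z = 1 := by
  have := commutatorElement_eq_div hn h z
  rw [powPairing_eq_one_of_mem_center hn hz,
    commutatorElement_eq_one_iff_mul_comm.mpr (mem_center_iff.mp hz h)] at this
  simpa using this.symm

end PowPairing

end GpGroup

theorem stmt_14_general (n : ℕ) (hodd : Odd n) (s t : ℤ) :
    ∃ γ : GpGroup n → MulAut (GpGroup n),
      (γ (gpX n)) (gpX n) = gpX n ∧
      (γ (gpX n)) (gpY n) = gpX n ^ ((n : ℤ) * s) * gpY n ∧
      (γ (gpY n)) (gpX n) = gpX n ^ (1 + (n : ℤ) * t) ∧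
      (γ (gpY n)) (gpY n) = gpY n ^ (1 + (n : ℤ) * (s + t)) ∧
      (∀ z ∈ Subgroup.center (GpGroup n), γ z = 1) ∧
      (∀ g h : GpGroup n, γ (g * h) = γ g * γ h) ∧
      (∀ (β : MulAut (GpGroup n)) (g : GpGroup n), γ (β g) = β * γ g * β⁻¹) := by
  let κ := GpGroup.powPairing hodd
  let B := κ.flip ^ s * κ ^ t
  have coe_B (g h : GpGroup n) : (B g h : GpGroup n) = κ h g ^ s * κ g h ^ t := rfl
  have B_center {z} (hz : z ∈ center (GpGroup n)) (g : GpGroup n) : B g z = 1 ∧ B z g = 1 := by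
    simp [B, κ, GpGroup.powPairing_eq_one_of_mem_center hodd hz,
      GpGroup.powPairing_apply_eq_one_of_mem_center hodd _ hz]
  have hB (a b c : GpGroup n) : B a (B b c) = 1 := (B_center (B b c).2 a).1
  refine ⟨pairingAction B hB, ?_, ?_, ?_, ?_, fun z hz ↦ ?_, map_mul _, fun β g ↦ ?_⟩
  · simp [coe_B, κ]
  · rw [pairingAction_apply, mem_center_iff.mp (B _ _).2]
    simp [coe_B, κ, zpow_mul]
  · simp [coe_B, κ, zpow_add, zpow_mul]
  · simp [coe_B, κ, zpow_add, zpow_mul, mul_add]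
  · exact pairingAction_eq_one hB (MonoidHom.ext fun g ↦ (B_center hz g).2)
  · refine pairingAction_mulAut_apply hB (fun g h ↦ ?_) g
    simp [coe_B, κ, GpGroup.map_powPairing, GpGroup.powPairing_mulAut_apply]

/-- For an odd prime `p`, `G_p = ⟨x, y : x^(p²) = y^(p²) = 1, [x,y] = x^p⟩`,
and `s, t ∈ ℤ/p`, there is a well-defined map `γ_{s,t} : G_p → Aut(G_p)` with
`γ_{s,t}(x) : x ↦ x, y ↦ x^(ps) y`, `γ_{s,t}(y) : x ↦ x^(1+pt),
y ↦ y^(1+p(s+t))`, killing `Z(G_p)`, which is an anti-homomorphism in the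
paper's convention (a homomorphism in Mathlib's composition convention) and is
`Aut(G_p)`-equivariant: `γ_{s,t}(g^β) = γ_{s,t}(g)^β`. -/
theorem stmt_14 (p : ℕ) (hp : p.Prime) (hodd : Odd p) (s t : ℤ) :
    ∃ γ : GpGroup p → MulAut (GpGroup p),
      (γ (gpX p)) (gpX p) = gpX p ∧
      (γ (gpX p)) (gpY p) = gpX p ^ ((p : ℤ) * s) * gpY p ∧
      (γ (gpY p)) (gpX p) = gpX p ^ (1 + (p : ℤ) * t) ∧
      (γ (gpY p)) (gpY p) = gpY p ^ (1 + (p : ℤ) * (s + t)) ∧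
      (∀ z ∈ Subgroup.center (GpGroup p), γ z = 1) ∧
      (∀ g h : GpGroup p, γ (g * h) = γ g * γ h) ∧
      (∀ (β : MulAut (GpGroup p)) (g : GpGroup p), γ (β g) = β * γ g * β⁻¹) :=
  stmt_14_general p hodd s t
end

section
/- Let p > 3 be a prime and G the free group of nilpotency class two and exponent p on n ≥ 2 generators, so V = G/Z(G) = G/G' and W = G' ≅ Λ²V as F_p-vector spaces. Let Δ : V × V → W be a bilinear map satisfying Δ(gβ, hβ) = Δ(g,h)β for every β ∈ GL(V) (acting naturally on W = Λ²V). Then there exists c ∈ F_p such that Δ(g, h) = c·(g ∧ h) for all g, h ∈ V. -/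
/-!
The transvection `v ↦ v + φ(v) s` acts on the exterior algebra by `x ↦ x + s ∧ (φ ⌋ x)`. Hence, if
`φ(g) = φ(s) = 0` and `φ(k) = 1`, equivariance applied to `(g, k)` reads
`Δ(g, k) + Δ(g, s) = Δ(g, k) + s ∧ (φ ⌋ Δ(g, k))`, that is, `Δ(g, s) = s ∧ (φ ⌋ Δ(g, k))`.

If `g`, `h` are independent and do not span `V`, this formula and its mirror image show that
`Δ(g, h)` is divisible by both `g` and `h`, so `Δ(g, h) = c (g ∧ h)`; if they span `V`, this holds
because `Λ²V` is then spanned by `g ∧ h`. The equivariant map `Δ - c (· ∧ ·)` vanishes at `(g, h)`,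
and the same formula spreads this zero to all of `V × V`.
-/

open Submodule (span)

section ExteriorAlgebra

open ExteriorAlgebra
open CliffordAlgebra (contractLeft contractLeft_ι_mul contractLeft_ι contractLeft_algebraMap)

variable {R M : Type*} [CommRing R] [AddCommGroup M] [Module R M]

lemma ι_mul_ι_swap (a b : M) : ι R b * ι R a = -(ι R a * ι R b) :=
  eq_neg_of_add_eq_zero_left (ι_add_mul_swap b a)

lemma ι_mul_ι_mul_self (a : M) (x : ExteriorAlgebra R M) : ι R a * (ι R a * x) = 0 := by
  rw [← mul_assoc, ι_sq_zero, zero_mul]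

lemma exteriorAlgebra_map_transvection (φ : Module.Dual R M) (s : M) (x : ExteriorAlgebra R M) :
    map (LinearMap.transvection φ s) x = x + ι R s * contractLeft φ x := by
  induction x using CliffordAlgebra.left_induction with
  | algebraMap r =>
    rw [contractLeft_algebraMap, mul_zero, add_zero]
    exact AlgHom.commutes _ r
  | add x y hx hy => rw [map_add, hx, hy, map_add, mul_add, add_add_add_comm]
  | ι_mul x m hx =>
    have hm : map (LinearMap.transvection φ s) (ι R m) = ι R m + φ m • ι R s := by
      rw [map_apply_ι, LinearMap.transvection.apply, map_add, map_smul]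
    have hswap : ι R m * (ι R s * contractLeft φ x) = -(ι R s * (ι R m * contractLeft φ x)) := by
      rw [← mul_assoc, ι_mul_ι_swap s m, neg_mul, mul_assoc]
    rw [map_mul, hx, contractLeft_ι_mul, hm]
    simp only [add_mul, mul_add, mul_sub, smul_mul_assoc, mul_smul_comm, ι_mul_ι_mul_self,
      smul_zero, hswap]
    abel

@[elab_as_elim]
lemma exteriorPower_two_induction {P : ExteriorAlgebra R M → Prop}
    (ι_mul_ι : ∀ a b, P (ι R a * ι R b)) (add : ∀ x y, P x → P y → P (x + y))
    {x : ExteriorAlgebra R M} (hx : x ∈ ⋀[R]^2 M) : P x := by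
  rw [exteriorPower, pow_two] at hx
  refine Submodule.mul_induction_on hx ?_ add
  rintro _ ⟨a, rfl⟩ _ ⟨b, rfl⟩
  exact ι_mul_ι a b

lemma contractLeft_mem_range_ι (φ : Module.Dual R M) {x : ExteriorAlgebra R M} (hx : x ∈ ⋀[R]^2 M) :
    contractLeft φ x ∈ LinearMap.range (ι R : M →ₗ[R] ExteriorAlgebra R M) := by
  refine exteriorPower_two_induction (fun a b => ⟨φ a • b - φ b • a, ?_⟩) (fun x y hx hy => ?_) hx
  · rw [contractLeft_ι_mul, contractLeft_ι, map_sub, map_smul, map_smul, ← Algebra.commutes,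
      ← Algebra.smul_def]
  · rw [map_add]
    exact add_mem hx hy

lemma exists_eq_smul_ι_mul_ι_of_span_pair_eq_top {g h : M} (hgh : span R {g, h} = ⊤)
    {x : ExteriorAlgebra R M} (hx : x ∈ ⋀[R]^2 M) : ∃ c : R, x = c • (ι R g * ι R h) := by
  refine exteriorPower_two_induction (fun a b => ?_) ?_ hx
  · obtain ⟨q, r, rfl⟩ := Submodule.mem_span_pair.1 (hgh ▸ Submodule.mem_top : a ∈ span R {g, h})
    obtain ⟨s, t, rfl⟩ := Submodule.mem_span_pair.1 (hgh ▸ Submodule.mem_top : b ∈ span R {g, h})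
    refine ⟨q * t - r * s, ?_⟩
    simp only [map_add, map_smul, mul_add, add_mul, smul_mul_assoc, mul_smul_comm, ι_mul_ι_swap g h,
      ι_sq_zero, smul_zero]
    module
  · rintro _ _ ⟨c, rfl⟩ ⟨d, rfl⟩
    exact ⟨c + d, (add_smul c d _).symm⟩

lemma eq_ι_mul_contractLeft_of_eq_ι_mul {θ : Module.Dual R M} {h : M} (hθ : θ h = 1)
    {x y : ExteriorAlgebra R M} (hx : x = ι R h * y) : x = ι R h * contractLeft θ x := by
  rw [hx, contractLeft_ι_mul, hθ, one_smul, mul_sub, ι_mul_ι_mul_self, sub_zero]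

lemma exists_eq_smul_ι_mul_ι_of_eq_ι_mul {θ : Module.Dual R M} {g h w : M} (hg : θ g = 0)
    (hh : θ h = 1) {x y : ExteriorAlgebra R M} (hxg : x = ι R g * ι R w) (hxh : x = ι R h * y) :
    ∃ c : R, x = c • (ι R g * ι R h) := by
  refine ⟨θ w, ?_⟩
  calc x = ι R h * contractLeft θ x := eq_ι_mul_contractLeft_of_eq_ι_mul hh hxh
    _ = ι R h * -(θ w • ι R g) := by
      rw [hxg, contractLeft_ι_mul, hg, zero_smul, zero_sub, contractLeft_ι, ← Algebra.commutes,
        ← Algebra.smul_def]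
    _ = θ w • (ι R g * ι R h) := by
      rw [mul_neg, mul_smul_comm, ι_mul_ι_swap g h, smul_neg, neg_neg]

variable (R M) in
/-- The exterior product `(g, h) ↦ g ∧ h` of two vectors, as a bilinear map `M × M → Λ(M)`. -/
def wedge : M →ₗ[R] M →ₗ[R] ExteriorAlgebra R M :=
  (LinearMap.mul R (ExteriorAlgebra R M)).compl₁₂ (ι R) (ι R)

lemma wedge_apply (g h : M) : wedge R M g h = ι R g * ι R h := rfl

end ExteriorAlgebra

section Dual

variable {K V : Type*} [Field K] [AddCommGroup V] [Module K V]

lemma exists_dual_eq_one_of_notMem {p : Submodule K V} {v : V} (hv : v ∉ p) :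
    ∃ φ : Module.Dual K V, (∀ w ∈ p, φ w = 0) ∧ φ v = 1 := by
  obtain ⟨φ, hφ, hφv⟩ := LinearMap.exists_extend_of_notMem (0 : p →ₗ[K] K) hv 1
  exact ⟨φ, fun w hw => LinearMap.congr_fun hφ ⟨w, hw⟩, hφv⟩

end Dual

/-- A bilinear map `Δ : M × M → Λ(M)` is *equivariant* if `Δ(βg, βh) = Λ(β)(Δ(g, h))` for every
`β ∈ GL(M)`. The values are taken in the whole exterior algebra, on which `β` acts by
functoriality; `Λ²M` is a `GL(M)`-stable submodule of it. -/
def IsGLEquivariant {R M : Type*} [CommRing R] [AddCommGroup M] [Module R M]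
    (Δ : M →ₗ[R] M →ₗ[R] ExteriorAlgebra R M) : Prop :=
  ∀ (β : M ≃ₗ[R] M) (g h : M),
    Δ (β g) (β h) = ExteriorAlgebra.map (β : M →ₗ[R] M) (Δ g h)

namespace IsGLEquivariant

open ExteriorAlgebra
open CliffordAlgebra (contractLeft)

section CommRing

variable {R M : Type*} [CommRing R] [AddCommGroup M] [Module R M]
  {Δ : M →ₗ[R] M →ₗ[R] ExteriorAlgebra R M}

lemma flip (hΔ : IsGLEquivariant Δ) : IsGLEquivariant Δ.flip :=
  fun β g h => hΔ β h g

lemma sub_smul_wedge (hΔ : IsGLEquivariant Δ) (c : R) :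
    IsGLEquivariant (Δ - c • wedge R M) := by
  intro β g h
  simp [wedge_apply, hΔ β g h]

lemma apply_eq_ι_mul_contractLeft (hΔ : IsGLEquivariant Δ) {φ : Module.Dual R M} {g k s : M}
    (hg : φ g = 0) (hk : φ k = 1) (hs : φ s = 0) :
    Δ g s = ι R s * contractLeft φ (Δ g k) := by
  have hτ : Δ g (k + s) = Δ g k + ι R s * contractLeft φ (Δ g k) := by
    rw [← exteriorAlgebra_map_transvection]
    simpa [LinearMap.transvection.apply, hg, hk] using hΔ (LinearEquiv.transvection hs) g k
  exact add_left_cancel ((map_add (Δ g) k s).symm.trans hτ)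

end CommRing

section Field

variable {K V : Type*} [Field K] [AddCommGroup V] [Module K V]
  {Δ : V →ₗ[K] V →ₗ[K] ExteriorAlgebra K V}

lemma exists_apply_eq_smul (hΔ : IsGLEquivariant Δ) (hW : ∀ g h, Δ g h ∈ ⋀[K]^2 V) {g h : V}
    (hgh : h ∉ span K {g}) : ∃ c : K, Δ g h = c • (ι K g * ι K h) := by
  by_cases htop : span K {g, h} = ⊤
  · exact exists_eq_smul_ι_mul_ι_of_span_pair_eq_top htop (hW g h)
  obtain ⟨k, hk⟩ := SetLike.exists_not_mem_of_ne_top _ htop rfl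
  obtain ⟨φ, hφ, hφk⟩ := exists_dual_eq_one_of_notMem hk
  have hφg : φ g = 0 := hφ g (Submodule.subset_span (by simp))
  have hφh : φ h = 0 := hφ h (Submodule.subset_span (by simp))
  have hdvd_h : Δ g h = ι K h * contractLeft φ (Δ g k) :=
    hΔ.apply_eq_ι_mul_contractLeft hφg hφk hφh
  have hdvd_g : Δ g h = ι K g * contractLeft φ (Δ k h) :=
    hΔ.flip.apply_eq_ι_mul_contractLeft hφh hφk hφg
  obtain ⟨w, hw⟩ := contractLeft_mem_range_ι φ (hW k h)
  obtain ⟨θ, hθ, hθh⟩ := exists_dual_eq_one_of_notMem hgh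
  exact exists_eq_smul_ι_mul_ι_of_eq_ι_mul (hθ g (Submodule.mem_span_singleton_self g)) hθh
    (hw ▸ hdvd_g) hdvd_h

lemma apply_eq_zero_of_apply_apply_eq_zero (hΔ : IsGLEquivariant Δ) {g h : V}
    (hgh : h ∉ span K {g}) (h_zero : Δ g h = 0) : Δ g = 0 := by
  obtain ⟨φ, hφ, hφh⟩ := exists_dual_eq_one_of_notMem hgh
  have hφg : φ g = 0 := hφ g (Submodule.mem_span_singleton_self g)
  ext s
  have hker : Δ g (s - φ s • h) = 0 := by
    rw [hΔ.apply_eq_ι_mul_contractLeft hφg hφh (by simp [hφh]), h_zero, map_zero, mul_zero]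
  simpa [h_zero] using hker

lemma eq_zero_of_apply_apply_eq_zero (hΔ : IsGLEquivariant Δ) {g h : V} (hg : g ≠ 0)
    (hgh : h ∉ span K {g}) (h_zero : Δ g h = 0) : Δ = 0 := by
  have hΔg : Δ g = 0 := hΔ.apply_eq_zero_of_apply_apply_eq_zero hgh h_zero
  have hswap {k : V} (hgk : g ∈ span K {k}) : k ∈ span K {g} := by
    simpa using mem_span_insert_exchange (s := ∅) (by simpa using hgk) (by simpa using hg)
  have hflip : ∀ k ∉ span K {g}, Δ.flip k = 0 := fun k hk =>
    hΔ.flip.apply_eq_zero_of_apply_apply_eq_zero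
      (fun hgk => hk (hswap hgk)) (LinearMap.congr_fun hΔg k)
  suffices h_all : ∀ k, Δ.flip k = 0 from
    LinearMap.ext₂ fun a k => LinearMap.congr_fun (h_all k) a
  intro k
  by_cases hk : k ∈ span K {g}
  · have hhk : h + k ∉ span K {g} := fun hmem => hgh ((Submodule.add_mem_iff_left _ hk).1 hmem)
    simpa [hflip h hgh] using hflip (h + k) hhk
  · exact hflip k hk

end Field

end IsGLEquivariant

open ExteriorAlgebra in
theorem stmt_17_general {K V : Type*} [Field K] [AddCommGroup V] [Module K V]
    (Δ : V →ₗ[K] V →ₗ[K] ExteriorAlgebra K V) (hW : ∀ g h : V, Δ g h ∈ ⋀[K]^2 V)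
    (hequiv : ∀ (β : V ≃ₗ[K] V) (g h : V),
      Δ (β g) (β h) = ExteriorAlgebra.map (β : V →ₗ[K] V) (Δ g h)) :
    ∃ c : K, ∀ g h : V, Δ g h = c • (ι K g * ι K h) := by
  by_cases hcyclic : ∃ v : V, span K {v} = ⊤
  · obtain ⟨v, hv⟩ := hcyclic
    refine ⟨0, fun g h => ?_⟩
    obtain ⟨c, hc⟩ := exists_eq_smul_ι_mul_ι_of_span_pair_eq_top (g := v) (h := v)
      (by simpa using hv) (hW g h)
    rw [hc, ι_sq_zero, smul_zero, zero_smul]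
  · push Not at hcyclic
    obtain ⟨g, hg⟩ := SetLike.exists_not_mem_of_ne_top _ (hcyclic 0) rfl
    obtain ⟨h, hgh⟩ := SetLike.exists_not_mem_of_ne_top _ (hcyclic g) rfl
    have hΔ : IsGLEquivariant Δ := hequiv
    obtain ⟨c, hc⟩ := hΔ.exists_apply_eq_smul hW hgh
    have h_eq : Δ = c • wedge K V := sub_eq_zero.1 <|
      (hΔ.sub_smul_wedge c).eq_zero_of_apply_apply_eq_zero (by simpa using hg) hgh
        (by simp [wedge_apply, hc])
    exact ⟨c, LinearMap.congr_fun₂ h_eq⟩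

/-- Let `p > 3` be prime and `V` an `F_p`-vector space of dimension `n ≥ 2`
(arising as `G/Z(G)` for `G` free of class two and exponent `p` on `n`
generators, with `G' ≅ Λ²V`). If `Δ : V × V → Λ²V` is bilinear and
`GL(V)`-equivariant, i.e. `Δ(gβ, hβ) = Δ(g,h)β` for every `β ∈ GL(V)` (acting
on `Λ²V ⊆ Λ(V)` via the induced map), then `Δ(g,h) = c·(g ∧ h)` for some
fixed scalar `c ∈ F_p`. -/
theorem stmt_17 (p n : ℕ) [Fact p.Prime] (hp3 : 3 < p) (hn : 2 ≤ n)
    (V : Type*) [AddCommGroup V] [Module (ZMod p) V]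
    [FiniteDimensional (ZMod p) V]
    (hdim : Module.finrank (ZMod p) V = n)
    (Δ : V →ₗ[ZMod p] V →ₗ[ZMod p] ExteriorAlgebra (ZMod p) V)
    (hW : ∀ g h : V, Δ g h ∈ ⋀[ZMod p]^2 V)
    (hequiv : ∀ (β : V ≃ₗ[ZMod p] V) (g h : V),
      Δ (β g) (β h) = ExteriorAlgebra.map (β : V →ₗ[ZMod p] V) (Δ g h)) :
    ∃ c : ZMod p, ∀ g h : V,
      Δ g h = c • (ExteriorAlgebra.ι (ZMod p) g * ExteriorAlgebra.ι (ZMod p) h) :=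
  stmt_17_general Δ hW hequiv
end
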